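/- arXiv:2003.10389 — 2 statements merged into one kernel-verified Lean document; each statement's English description precedes it below -/
import Mathlib

section
/- Let δ>0 and s ∈ (0,1). The derivative d/dr G_δ(s,r), defined for r ∈ (s,1), has a limit as r decreases to s, and lim_{r↓s} d/dr G_δ(s,r) = −δ·s + (δ−1)/2. -/
open MeasureTheory Real Filter

/-- Ascending Pochhammer symbol `(a)_k = a(a+1)⋯(a+k-1)`. -/
noncomputable def poch (a : ℝ) (k : ℕ) : ℝ := ∏ i ∈ Finset.range k, (a + i)

/-- Gauss hypergeometric function `₂F₁(a,b,c,z) = ∑ (a)_k (b)_k / (k! (c)_k) z^k`. -/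
noncomputable def hyp2F1 (a b c z : ℝ) : ℝ :=
  ∑' k : ℕ, (poch a k * poch b k) / ((Nat.factorial k : ℝ) * poch c k) * z ^ k

/-- `K(δ) = 2 Γ((δ+1)/2)² / Γ(δ/2)²`. -/
noncomputable def Kcoef (δ : ℝ) : ℝ :=
  2 * Real.Gamma ((δ + 1) / 2) ^ 2 / Real.Gamma (δ / 2) ^ 2

/-- Two-point kernel `G_δ(s,r)`, equal to the second moment `E^δ[X_s X_r]` of a
δ-dimensional Bessel bridge from 0 to 0 over [0,1]. -/
noncomputable def twoPt (δ s r : ℝ) : ℝ :=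
  if s < r then
    Kcoef δ * (r - s) ^ (δ / 2 + 1) * (s * (1 - r)) ^ ((1 : ℝ) / 2) *
      (r * (1 - s)) ^ (-((δ + 1) / 2)) *
      hyp2F1 ((δ + 1) / 2) ((δ + 1) / 2) (δ / 2) (s * (1 - r) / (r * (1 - s)))
  else
    Kcoef δ * (s - r) ^ (δ / 2 + 1) * (r * (1 - s)) ^ ((1 : ℝ) / 2) *
      (s * (1 - r)) ^ (-((δ + 1) / 2)) *
      hyp2F1 ((δ + 1) / 2) ((δ + 1) / 2) (δ / 2) (r * (1 - s) / (s * (1 - r)))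

/-- Coefficient `D(s,r)`. -/
noncomputable def Dcoef (s r : ℝ) : ℝ :=
  if s < r then (1 - s) / ((r - s) * (1 - r)) else s / (r * (s - r))

/-- Coefficient `C_k = Γ(k+(δ+1)/2)/(Γ(δ/2) Γ(k+δ/2) k!)`. -/
noncomputable def Ccoef (δ : ℝ) (k : ℕ) : ℝ :=
  Real.Gamma ((k : ℝ) + (δ + 1) / 2) /
    (Real.Gamma (δ / 2) * Real.Gamma ((k : ℝ) + δ / 2) * (Nat.factorial k : ℝ))

/-- Coefficient `f_k(s,r)`. -/
noncomputable def fcoef (s r : ℝ) (k : ℕ) : ℝ :=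
  if s < r then (2 * (r - s)) ^ ((1 : ℝ) / 2 - (k : ℝ)) * (s / r) ^ ((k : ℝ) + 1 / 2)
  else (2 * (s - r)) ^ ((1 : ℝ) / 2 - (k : ℝ)) * ((1 - s) / (1 - r)) ^ ((k : ℝ) + 1 / 2)

/-- `Σ^δ_{r,s}(b) = Σ^δ_r(X_s | b)`, the density-weighted conditional expectation of a
δ-dimensional Bessel bridge. -/
noncomputable def SigmaRS (δ r s b : ℝ) : ℝ :=
  ((2 : ℝ) ^ (δ / 2 - 1) * (r * (1 - r)) ^ (δ / 2))⁻¹ *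
    Real.exp (-(Dcoef s r) * b ^ 2 / 2) *
    ∑' k : ℕ, Ccoef δ k * fcoef s r k * b ^ (2 * k)


noncomputable def hterm (a c : ℝ) (k : ℕ) : ℝ :=
  (poch a k * poch a k) / ((Nat.factorial k : ℝ) * poch c k)

lemma poch_zero (a : ℝ) : poch a 0 = 1 := by simp [poch]

lemma poch_succ (a : ℝ) (k : ℕ) : poch a (k + 1) = poch a k * (a + k) := by
  simp [poch, Finset.prod_range_succ]

lemma poch_succ_left (a : ℝ) (k : ℕ) : poch a (k + 1) = a * poch (a + 1) k := by
  simp only [poch, Finset.prod_range_succ']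
  rw [mul_comm]
  congr 1
  · simp
  · refine Finset.prod_congr rfl fun i _ => ?_
    push_cast; ring

lemma poch_pos {c : ℝ} (hc : 0 < c) (k : ℕ) : 0 < poch c k :=
  Finset.prod_pos fun i _ => by positivity

lemma hterm_zero (a c : ℝ) : hterm a c 0 = 1 := by simp [hterm, poch_zero]

lemma hterm_nonneg (a : ℝ) {c : ℝ} (hc : 0 < c) (k : ℕ) : 0 ≤ hterm a c k := by
  have := poch_pos hc k
  unfold hterm
  have := mul_self_nonneg (poch a k)
  positivity

lemma hterm_succ (a : ℝ) {c : ℝ} (hc : 0 < c) (k : ℕ) :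
    ((k : ℝ) + 1) * (c + k) * hterm a c (k + 1) = (a + k) ^ 2 * hterm a c k := by
  have h1 := (poch_pos hc k).ne'
  have h2 : c + k ≠ 0 := by positivity
  have h3 : (Nat.factorial k : ℝ) ≠ 0 := by positivity
  have h4 : (k : ℝ) + 1 ≠ 0 := by positivity
  simp only [hterm, poch_succ, Nat.factorial_succ]
  push_cast
  field_simp

/-- the sum of `(k+1) h_{k+1}` in terms of shifted parameters -/
lemma hterm_shift (a : ℝ) {c : ℝ} (hc : 0 < c) (k : ℕ) :
    ((k : ℝ) + 1) * hterm a c (k + 1) = a ^ 2 / c * hterm (a + 1) (c + 1) k := by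
  have h1 := (poch_pos (show 0 < c + 1 by linarith) k).ne'
  have h3 : (Nat.factorial k : ℝ) ≠ 0 := by positivity
  have h4 : (k : ℝ) + 1 ≠ 0 := by positivity
  simp only [hterm, poch_succ_left, Nat.factorial_succ]
  push_cast
  field_simp

lemma hterm_c_succ (a : ℝ) {c : ℝ} (hc : 0 < c) (k : ℕ) :
    (c + k) * hterm a (c + 1) k = c * hterm a c k := by
  have h1 := (poch_pos (show 0 < c + 1 by linarith) k).ne'
  have h1' := (poch_pos hc k).ne'
  have h3 : (Nat.factorial k : ℝ) ≠ 0 := by positivity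
  have h5 := (poch_succ c k).symm.trans (poch_succ_left c k)
  simp only [hterm]
  field_simp
  linear_combination poch a k ^ 2 * h5

lemma hterm_tele (a : ℝ) {c : ℝ} (hc : 0 < c) (k : ℕ) :
    (k : ℝ) * hterm a c k - ((k + 1 : ℕ) : ℝ) * hterm a c (k + 1)
      = (c - 2 * a) * hterm a c k - (c - a) ^ 2 / c * hterm a (c + 1) k := by
  have h2 : c + k ≠ 0 := by positivity
  have e1 := hterm_succ a hc k
  have e2 := hterm_c_succ a hc k
  have e1' : ((k : ℝ) + 1) * hterm a c (k + 1) = (a + k) ^ 2 * hterm a c k / (c + k) := by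
    rw [eq_div_iff h2]; linear_combination e1
  have e2' : hterm a (c + 1) k = c * hterm a c k / (c + k) := by
    rw [eq_div_iff h2]; linear_combination e2
  push_cast
  rw [e1', e2']
  field_simp
  ring

lemma hterm_summable (a : ℝ) {c : ℝ} (hc : 0 < c) (h : 0 < c - 2 * a) :
    Summable (hterm a c) := by
  obtain ⟨N, hN⟩ := exists_nat_gt (2 * (c - a) ^ 2 / (c - 2 * a))
  have key : ∀ k, N ≤ k → (c - 2 * a) / 2 * hterm a c k ≤
      (k : ℝ) * hterm a c k - ((k + 1 : ℕ) : ℝ) * hterm a c (k + 1) := by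
    intro k hk
    have hk' : (N : ℝ) ≤ k := by exact_mod_cast hk
    have h0 := hterm_nonneg a hc k
    rw [hterm_tele a hc]
    have h2 : 0 < c + k := by positivity
    have e2' : hterm a (c + 1) k = c * hterm a c k / (c + k) := by
      rw [eq_div_iff h2.ne']; linear_combination hterm_c_succ a hc k
    have : (c - a) ^ 2 / c * hterm a (c + 1) k = (c - a) ^ 2 / (c + k) * hterm a c k := by
      rw [e2']; field_simp
    rw [this]
    have h3 : (c - a) ^ 2 / (c + k) ≤ (c - 2 * a) / 2 := by
      rw [div_le_div_iff₀ h2 (by norm_num)]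
      rw [div_lt_iff₀ h] at hN
      nlinarith
    nlinarith
  rw [← summable_nat_add_iff N]
  have hpos : 0 < (c - 2 * a) / 2 := by linarith
  refine summable_of_sum_range_le (c := ((c - 2 * a) / 2)⁻¹ * (N * hterm a c N))
    (fun n => hterm_nonneg a hc _) fun n => ?_
  rw [← div_eq_inv_mul, le_div_iff₀ hpos, mul_comm, Finset.mul_sum]
  have : ∀ n : ℕ, ∑ i ∈ Finset.range n, (c - 2 * a) / 2 * hterm a c (i + N) ≤
      N * hterm a c N - ((n + N : ℕ) : ℝ) * hterm a c (n + N) := by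
    intro n
    induction n with
    | zero => simp
    | succ n ih =>
      rw [Finset.sum_range_succ]
      have := key (n + N) (by omega)
      rw [show n + 1 + N = n + N + 1 by omega]
      linarith
  have h5 := this n
  have h6 := mul_nonneg (Nat.cast_nonneg (α := ℝ) (n + N)) (hterm_nonneg a hc (n + N))
  linarith

lemma tendsto_mul_hterm (a : ℝ) {c : ℝ} (hc : 0 < c) (h : 0 < c - 2 * a) :
    Tendsto (fun k : ℕ => (k : ℝ) * hterm a c k) atTop (nhds 0) := by
  have s1 := hterm_summable a hc h
  have s2 := hterm_summable a (show 0 < c + 1 by linarith) (by linarith)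
  have hs := (s1.mul_left (c - 2 * a)).sub (s2.mul_left ((c - a) ^ 2 / c))
  have ht := hs.hasSum.tendsto_sum_nat
  have hL : Tendsto (fun k : ℕ => (k : ℝ) * hterm a c k) atTop
      (nhds (0 - ∑' k, ((c - 2 * a) * hterm a c k - (c - a) ^ 2 / c * hterm a (c + 1) k))) := by
    refine (tendsto_const_nhds.sub ht).congr fun n => ?_
    simp_rw [← hterm_tele a hc]
    rw [Finset.sum_range_sub']
    simp
  set L := 0 - ∑' k, ((c - 2 * a) * hterm a c k - (c - a) ^ 2 / c * hterm a (c + 1) k)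
  have hL0 : 0 ≤ L := ge_of_tendsto' hL fun k => mul_nonneg (Nat.cast_nonneg _) (hterm_nonneg a hc k)
  rcases hL0.eq_or_lt with h0 | h0
  · rw [h0]; exact hL
  · exfalso
    have hev := hL.eventually (lt_mem_nhds (half_lt_self h0))
    have : Summable (fun n : ℕ => L / 2 * (1 / (n : ℝ))) := by
      refine Summable.of_norm_bounded_eventually_nat s1 ?_
      filter_upwards [hev, eventually_gt_atTop 0] with n hn hn0
      have : (0 : ℝ) < n := by exact_mod_cast hn0
      rw [Real.norm_of_nonneg (by positivity), mul_one_div, div_le_iff₀ this]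
      linarith
    rw [summable_mul_left_iff (by linarith)] at this
    exact Real.not_summable_one_div_natCast this

lemma hsum_rec (a : ℝ) {c : ℝ} (hc : 0 < c) (h : 0 < c - 2 * a) :
    (c - 2 * a) * ∑' k, hterm a c k = (c - a) ^ 2 / c * ∑' k, hterm a (c + 1) k := by
  have s1 := hterm_summable a hc h
  have s2 := hterm_summable a (show 0 < c + 1 by linarith) (by linarith)
  have hs := (s1.mul_left (c - 2 * a)).sub (s2.mul_left ((c - a) ^ 2 / c))
  have ht := hs.hasSum.tendsto_sum_nat
  have hL : Tendsto (fun k : ℕ => (k : ℝ) * hterm a c k) atTop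
      (nhds (0 - ∑' k, ((c - 2 * a) * hterm a c k - (c - a) ^ 2 / c * hterm a (c + 1) k))) := by
    refine (tendsto_const_nhds.sub ht).congr fun n => ?_
    simp_rw [← hterm_tele a hc]
    rw [Finset.sum_range_sub']
    simp
  have := tendsto_nhds_unique hL (tendsto_mul_hterm a hc h)
  rw [(s1.mul_left (c - 2 * a)).tsum_sub (s2.mul_left ((c - a) ^ 2 / c)), tsum_mul_left,
    tsum_mul_left] at this
  linarith

lemma poch_le {c d : ℝ} (hc : 0 < c) (h : c ≤ d) (k : ℕ) : poch c k ≤ poch d k := by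
  unfold poch
  refine Finset.prod_le_prod (fun i _ => by positivity) fun i _ => by linarith

lemma hsum_tendsto_one (a : ℝ) {c : ℝ} (hc : 0 < c) (h : 0 < c - 2 * a) :
    Tendsto (fun n : ℕ => ∑' k, hterm a (c + n) k) atTop (nhds 1) := by
  have s1 := hterm_summable a hc h
  have hb : ∀ (n k : ℕ), hterm a (c + n) (k + 1) ≤ c / (c + n) * hterm a c (k + 1) := by
    intro n k
    have hn : 0 < c + n := by positivity
    have h1 := poch_pos (show 0 < c + 1 by linarith) k
    have h2 := poch_le (show 0 < c + 1 by linarith)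
      (show c + 1 ≤ c + n + 1 by linarith [Nat.cast_nonneg (α := ℝ) n]) k
    have h3 : (0 : ℝ) < (Nat.factorial (k + 1) : ℝ) := by positivity
    simp only [hterm, poch_succ_left c, poch_succ_left (c + n)]
    have : c / (c + n) * (poch a (k + 1) * poch a (k + 1) /
        ((Nat.factorial (k + 1) : ℝ) * (c * poch (c + 1) k))) =
        poch a (k + 1) * poch a (k + 1) / ((Nat.factorial (k + 1) : ℝ) *
          ((c + n) * poch (c + 1) k)) := by
      field_simp
    rw [this]
    have := mul_self_nonneg (poch a (k + 1))
    gcongr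
  have hsn : ∀ n : ℕ, Summable (hterm a (c + n)) := fun n =>
    hterm_summable a (by positivity) (by linarith [Nat.cast_nonneg (α := ℝ) n])
  have lo : ∀ n : ℕ, 1 ≤ ∑' k, hterm a (c + n) k := by
    intro n
    have := (hsn n).le_tsum 0 (fun k _ => hterm_nonneg a (by positivity) k)
    rwa [hterm_zero] at this
  have hi : ∀ n : ℕ, ∑' k, hterm a (c + n) k ≤ 1 + c / (c + n) * ∑' k, hterm a c (k + 1) := by
    intro n
    rw [(hsn n).tsum_eq_zero_add, hterm_zero, ← tsum_mul_left]
    gcongr 1 + ?_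
    exact ((summable_nat_add_iff 1).2 (hsn n)).tsum_le_tsum (hb n)
      (((summable_nat_add_iff 1).2 s1).mul_left _)
  refine tendsto_of_tendsto_of_tendsto_of_le_of_le tendsto_const_nhds ?_ lo hi
  have : Tendsto (fun n : ℕ => c / (c + n)) atTop (nhds 0) :=
    tendsto_const_nhds.div_atTop (tendsto_atTop_add_const_left _ _ tendsto_natCast_atTop_atTop)
  simpa using (this.mul_const (∑' k, hterm a c (k + 1))).const_add 1

lemma hsum_poch (a : ℝ) {c : ℝ} (hc : 0 < c) (h : 0 < c - 2 * a) (n : ℕ) :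
    poch c n * poch (c - 2 * a) n * ∑' k, hterm a c k =
      poch (c - a) n ^ 2 * ∑' k, hterm a (c + n) k := by
  induction n with
  | zero => simp [poch_zero]
  | succ n ih =>
    have hn : 0 < c + n := by positivity
    have := hsum_rec a hn (by linarith [Nat.cast_nonneg (α := ℝ) n])
    simp only [poch_succ]
    push_cast
    rw [← add_assoc]
    have h2 : (c + n) * (c + n - 2 * a) * ∑' k, hterm a (c + n) k =
        (c + n - a) ^ 2 * ∑' k, hterm a (c + n + 1) k := by
      rw [mul_assoc, this]; field_simp
    linear_combination (c + n) * (c + n - 2 * a) * ih + poch (c - a) n ^ 2 * h2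

/-- Gauss's summation theorem (case `a = b`). -/
lemma hsum_gauss (a : ℝ) {c : ℝ} (hc : 0 < c) (h : 0 < c - 2 * a) :
    ∑' k, hterm a c k = Gamma c * Gamma (c - 2 * a) / Gamma (c - a) ^ 2 := by
  have hca : 0 < c - a := by linarith
  have e : ∀ d : ℝ, ∀ n : ℕ, Real.GammaSeq d n = (n : ℝ) ^ d * (Nat.factorial n : ℝ) / poch d (n + 1) :=
    fun d n => rfl
  have t1 := Real.GammaSeq_tendsto_Gamma c
  have t2 := Real.GammaSeq_tendsto_Gamma (c - 2 * a)
  have t3 := Real.GammaSeq_tendsto_Gamma (c - a)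
  have t := ((t1.mul t2).div (t3.pow 2) (pow_ne_zero 2 (Real.Gamma_pos_of_pos hca).ne'))
  have t4 := (hsum_tendsto_one a hc h).comp (tendsto_add_atTop_nat 1)
  have t5 := t.mul t4
  rw [mul_one] at t5
  refine tendsto_nhds_unique (tendsto_const_nhds.congr' ?_) t5
  filter_upwards [eventually_gt_atTop 0] with n hn
  have hn : (0 : ℝ) < n := by exact_mod_cast hn
  have key := hsum_poch a hc h (n + 1)
  have p1 := (poch_pos hc (n + 1)).ne'
  have p2 := (poch_pos h (n + 1)).ne'
  have p3 := (poch_pos hca (n + 1)).ne'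
  have q : (n : ℝ) ^ c * (n : ℝ) ^ (c - 2 * a) = ((n : ℝ) ^ (c - a)) ^ 2 := by
    rw [pow_two, ← Real.rpow_add hn, ← Real.rpow_add hn]; ring_nf
  have q1 : (n : ℝ) ^ c ≠ 0 := (Real.rpow_pos_of_pos hn _).ne'
  have q2 : (n : ℝ) ^ (c - a) ≠ 0 := (Real.rpow_pos_of_pos hn _).ne'
  have q3 : (Nat.factorial n : ℝ) ≠ 0 := by positivity
  have : Real.GammaSeq c n * Real.GammaSeq (c - 2 * a) n / Real.GammaSeq (c - a) n ^ 2
      = poch (c - a) (n + 1) ^ 2 / (poch c (n + 1) * poch (c - 2 * a) (n + 1)) := by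
    simp only [e]
    rw [div_mul_div_comm, div_pow, div_div_div_eq, div_eq_div_iff (by positivity) (by positivity)]
    linear_combination (Nat.factorial n : ℝ) ^ 2 * poch (c - a) (n + 1) ^ 2 * poch c (n + 1) * poch (c - 2 * a) (n + 1) * q
  simp only [Pi.div_apply, Function.comp_apply]
  rw [this, div_mul_eq_mul_div, eq_div_iff (by positivity)]
  linear_combination key

section PS
open PowerSeries

lemma coeff_ode (f : PowerSeries ℝ) (a c : ℝ) (n : ℕ) :
    coeff n (X * derivative ℝ (derivative ℝ f) + C c * derivative ℝ f
      - (X * (X * derivative ℝ (derivative ℝ f)) + C (2 * a + 1) * (X * derivative ℝ f)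
        + C (a ^ 2) * f)) =
    ((n : ℝ) + 1) * (c + n) * coeff (n + 1) f - (a + n) ^ 2 * coeff n f := by
  obtain ⟨d, hd⟩ : ∃ d, d = 2 * a + 1 := ⟨_, rfl⟩
  rw [← hd]
  rcases n with _ | _ | n
  · simp only [map_sub, map_add, coeff_C_mul, coeff_derivative, coeff_zero_X_mul]
    push_cast
    ring
  · simp only [map_sub, map_add, coeff_succ_X_mul, coeff_C_mul, coeff_derivative, zero_add,
      coeff_zero_X_mul]
    rw [hd]
    push_cast
    ring
  · simp only [map_sub, map_add, coeff_succ_X_mul, coeff_C_mul, coeff_derivative]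
    rw [hd]
    push_cast
    ring

/-- Euler's transformation on the level of coefficients. -/
lemma euler_coeff {c : ℝ} (hc : 0 < c) (n : ℕ) :
    ∑ p ∈ Finset.HasAntidiagonal.antidiagonal n, (poch (c + 1) p.1 / (Nat.factorial p.1 : ℝ)) *
      hterm (-1 / 2) c p.2 = hterm (c + 1 / 2) c n := by
  set B : PowerSeries ℝ := PowerSeries.mk fun k => poch (c + 1) k / (Nat.factorial k : ℝ) with hB
  set H : PowerSeries ℝ := PowerSeries.mk (hterm (-1 / 2) c) with hH
  have hP : ∀ n, coeff n (B * H) = ∑ p ∈ Finset.HasAntidiagonal.antidiagonal n,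
      (poch (c + 1) p.1 / (Nat.factorial p.1 : ℝ)) * hterm (-1 / 2) c p.2 := by
    intro n
    rw [coeff_mul]
    simp [hB, hH]
  rw [← hP]
  have b1 : derivative ℝ B = X * derivative ℝ B + C (c + 1) * B := by
    ext n
    have : coeff n (X * derivative ℝ B) = n * coeff n B := by
      rcases n with _ | n
      · simp
      · rw [coeff_succ_X_mul, coeff_derivative]; push_cast; ring
    rw [map_add, this, coeff_C_mul, coeff_derivative]
    simp only [hB, coeff_mk, poch_succ, Nat.factorial_succ]
    have h3 : (Nat.factorial n : ℝ) ≠ 0 := by positivity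
    have h4 : (n : ℝ) + 1 ≠ 0 := by positivity
    push_cast
    field_simp
    ring
  have b2 : derivative ℝ (derivative ℝ B) = derivative ℝ B + X * derivative ℝ (derivative ℝ B)
      + C (c + 1) * derivative ℝ B := by
    have := congrArg (derivative ℝ) b1
    simp only [map_add, Derivation.leibniz, derivative_X, derivative_C, smul_eq_mul] at this
    rw [show (C (c + 1) : PowerSeries ℝ) = C c + C 1 by rw [map_add]]
    linear_combination this
  have h1 : X * derivative ℝ (derivative ℝ H) + C c * derivative ℝ H
      - (X * (X * derivative ℝ (derivative ℝ H)) + C (2 * (-1 / 2 : ℝ) + 1) * (X * derivative ℝ H)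
        + C ((-1 / 2 : ℝ) ^ 2) * H) = 0 := by
    ext n
    rw [coeff_ode]
    simp only [hH, coeff_mk, map_zero]
    linear_combination hterm_succ (-1 / 2) hc n
  have h2 : X * derivative ℝ (derivative ℝ (B * H)) + C c * derivative ℝ (B * H)
      - (X * (X * derivative ℝ (derivative ℝ (B * H)))
        + C (2 * (c + 1 / 2) + 1) * (X * derivative ℝ (B * H))
        + C ((c + 1 / 2) ^ 2) * (B * H)) = 0 := by
    have hX : (1 - X : PowerSeries ℝ) ≠ 0 := by
      intro h
      have := congrArg (coeff 0) h
      simp at this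
    apply (mul_eq_zero.1 (?_ : (1 - X : PowerSeries ℝ) * _ = 0)).resolve_left hX
    have e1 : (C (2 * (-1 / 2 : ℝ) + 1) : PowerSeries ℝ) = 0 := by norm_num
    have e2 : (C ((-1 / 2 : ℝ) ^ 2) : PowerSeries ℝ) = C (1 / 4) := by norm_num
    have e3 : (C (2 * (c + 1 / 2) + 1 : ℝ) : PowerSeries ℝ) = 2 * C c + 2 := by
      rw [show 2 * (c + 1 / 2) + 1 = c + c + 1 + 1 by ring]
      simp only [map_add, map_one]; ring
    have e4 : (C ((c + 1 / 2) ^ 2 : ℝ) : PowerSeries ℝ) = C c ^ 2 + C c + C (1 / 4) := by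
      rw [← map_pow, ← map_add, ← map_add]; congr 1; ring
    have e5 : (C (c + 1) : PowerSeries ℝ) = C c + 1 := by simp
    rw [e1, e2] at h1
    rw [e5] at b1 b2
    rw [e3, e4]
    simp only [map_add, Derivation.leibniz, smul_eq_mul]
    generalize derivative ℝ (derivative ℝ B) = B2 at *
    generalize derivative ℝ B = B1 at *
    generalize derivative ℝ (derivative ℝ H) = H2 at *
    generalize derivative ℝ H = H1 at *
    generalize (C (1 / 4) : PowerSeries ℝ) = q at *
    generalize (C c : PowerSeries ℝ) = γ at *
    clear_value B H
    linear_combination (1 - X) * B * h1 + X * (1 - X) * H * b2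
      + (X * H * (γ + 2) + X * (1 - X) * 2 * H1 + (γ - (2 * γ + 2) * X) * H) * b1
  have hr : ∀ n : ℕ, ((n : ℝ) + 1) * (c + n) * coeff (n + 1) (B * H)
      = (c + 1 / 2 + n) ^ 2 * coeff n (B * H) := by
    intro n
    have := congrArg (coeff n) h2
    rw [coeff_ode, map_zero] at this
    linarith
  induction n with
  | zero => rw [hP]; simp [hterm_zero, poch_zero]
  | succ n ih =>
    have e := hr n
    rw [ih, ← hterm_succ _ hc] at e
    have : ((n : ℝ) + 1) * (c + n) ≠ 0 := by positivity
    exact mul_left_cancel₀ this e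

end PS

lemma poch_eq_asc (a : ℝ) (n : ℕ) : poch a n = (ascPochhammer ℝ n).eval a := by
  induction n with
  | zero => simp [poch_zero]
  | succ n ih => rw [poch_succ, ih, ascPochhammer_succ_eval]

lemma binom_hasSum (m : ℝ) {z : ℝ} (hz0 : 0 ≤ z) (hz1 : z < 1) :
    HasSum (fun k : ℕ => poch m k / (Nat.factorial k : ℝ) * z ^ k) ((1 - z) ^ (-m)) := by
  have h := (Real.one_div_one_sub_rpow_hasFPowerSeriesOnBall_zero m).hasSum (y := z)
    (by simp [Real.enorm_eq_ofReal hz0, hz1])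
  rw [zero_add, one_div, ← Real.rpow_neg (by linarith)] at h
  suffices hfun : (fun k : ℕ => poch m k / (Nat.factorial k : ℝ) * z ^ k) = fun n =>
      (FormalMultilinearSeries.ofScalars ℝ (fun n : ℕ => Ring.choose (m + n - 1) n) n)
        fun _ => z by
    rw [hfun]; exact h
  funext k
  rw [FormalMultilinearSeries.ofScalars_apply_eq, smul_eq_mul]
  congr 1
  have := Ring.factorial_nsmul_multichoose_eq_ascPochhammer m k
  rw [Polynomial.ascPochhammer_smeval_eq_eval, ← poch_eq_asc, nsmul_eq_mul] at this
  rw [← this, Ring.choose]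
  have h3 : (Nat.factorial k : ℝ) ≠ 0 := by positivity
  rw [mul_div_cancel_left₀ _ h3]
  congr 1
  ring

lemma hterm_summable_half {c : ℝ} (hc : 0 < c) : Summable (hterm (-1 / 2) c) :=
  hterm_summable _ hc (by linarith)

/-- Euler's transformation. -/
lemma euler_transform {c : ℝ} (hc : 0 < c) {z : ℝ} (hz0 : 0 ≤ z) (hz1 : z < 1) :
    hyp2F1 (c + 1 / 2) (c + 1 / 2) c z =
      (1 - z) ^ (-(c + 1)) * ∑' k, hterm (-1 / 2) c k * z ^ k := by
  have hb := binom_hasSum (c + 1) hz0 hz1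
  rw [← hb.tsum_eq]
  have s2 : Summable fun k => hterm (-1 / 2) c k * z ^ k := by
    refine Summable.of_nonneg_of_le
      (fun k => mul_nonneg (hterm_nonneg _ hc k) (pow_nonneg hz0 k)) (fun k => ?_)
      (hterm_summable_half hc)
    exact mul_le_of_le_one_right (hterm_nonneg _ hc k) (pow_le_one₀ hz0 hz1.le)
  rw [tsum_mul_tsum_eq_tsum_sum_antidiagonal_of_summable_norm hb.summable.norm s2.norm]
  unfold hyp2F1
  refine tsum_congr fun n => ?_
  have := euler_coeff hc n
  rw [hterm] at this
  rw [← this, Finset.sum_mul]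
  refine Finset.sum_congr rfl fun p hp => ?_
  rw [← Finset.HasAntidiagonal.mem_antidiagonal.1 hp, pow_add]
  ring

lemma hterm_deriv_summable {c : ℝ} (hc : 0 < c) :
    Summable (fun k : ℕ => hterm (-1 / 2) c k * k) := by
  rw [← summable_nat_add_iff 1]
  have h := (hterm_summable (-1 / 2 + 1) (show 0 < c + 1 by linarith) (by linarith)).mul_left
    ((-1 / 2) ^ 2 / c)
  refine h.congr fun k => ?_
  rw [← hterm_shift _ hc]
  push_cast; ring

noncomputable def Hf (c z : ℝ) : ℝ := ∑' k, hterm (-1 / 2) c k * z ^ k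

noncomputable def Hd (c z : ℝ) : ℝ := ∑' k : ℕ, hterm (-1 / 2) c k * (k * z ^ (k - 1))

lemma Hf_one {c : ℝ} (hc : 0 < c) :
    Hf c 1 = Gamma c * Gamma (c + 1) / Gamma (c + 1 / 2) ^ 2 := by
  simp only [Hf, one_pow, mul_one]
  rw [hsum_gauss _ hc (by linarith)]
  ring_nf

lemma Hd_one {c : ℝ} (hc : 0 < c) :
    Hd c 1 = 1 / (4 * c) * Hf c 1 := by
  rw [Hf_one hc]
  simp only [Hd, one_pow, mul_one]
  rw [(hterm_deriv_summable hc).tsum_eq_zero_add]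
  have : ∀ k : ℕ, hterm (-1 / 2) c (k + 1) * ((k + 1 : ℕ) : ℝ) =
      (-1 / 2) ^ 2 / c * hterm (-1 / 2 + 1) (c + 1) k := by
    intro k
    rw [← hterm_shift _ hc]
    push_cast; ring
  simp_rw [this]
  rw [tsum_mul_left, hsum_gauss _ (by linarith) (by linarith)]
  rw [show c + 1 - 2 * (-1 / 2 + 1) = c by ring, show c + 1 - (-1 / 2 + 1) = c + 1 / 2 by ring]
  simp only [Nat.cast_zero, mul_zero, zero_add]
  field_simp
  norm_num

lemma Hf_continuousOn {c : ℝ} (hc : 0 < c) : ContinuousOn (Hf c) (Set.Icc 0 1) := by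
  refine continuousOn_tsum (fun k => by fun_prop) (hterm_summable_half hc) fun k x hx => ?_
  rw [Real.norm_of_nonneg (mul_nonneg (hterm_nonneg _ hc k) (pow_nonneg hx.1 k))]
  exact mul_le_of_le_one_right (hterm_nonneg _ hc k) (pow_le_one₀ hx.1 hx.2)

lemma Hd_bound {c : ℝ} (hc : 0 < c) (k : ℕ) (x : ℝ) (hx : x ∈ Set.Icc (0 : ℝ) 1) :
    ‖hterm (-1 / 2) c k * (k * x ^ (k - 1))‖ ≤ hterm (-1 / 2) c k * k := by
  rw [Real.norm_of_nonneg (mul_nonneg (hterm_nonneg _ hc k)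
    (mul_nonneg (Nat.cast_nonneg _) (pow_nonneg hx.1 _)))]
  exact mul_le_mul_of_nonneg_left
    (mul_le_of_le_one_right (Nat.cast_nonneg _) (pow_le_one₀ hx.1 hx.2)) (hterm_nonneg _ hc k)

lemma Hd_continuousOn {c : ℝ} (hc : 0 < c) : ContinuousOn (Hd c) (Set.Icc 0 1) :=
  continuousOn_tsum (fun k => by fun_prop) (hterm_deriv_summable hc) (Hd_bound hc)

lemma Hf_hasDerivAt {c : ℝ} (hc : 0 < c) {z : ℝ} (hz : z ∈ Set.Ioo (0 : ℝ) 1) :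
    HasDerivAt (Hf c) (Hd c z) z := by
  refine hasDerivAt_tsum_of_isPreconnected (t := Set.Ioo (0 : ℝ) 1) (y₀ := 1 / 2)
    (hterm_deriv_summable hc) isOpen_Ioo isPreconnected_Ioo
    (fun k y _ => (hasDerivAt_pow k y).const_mul _)
    (fun k y hy => Hd_bound hc k y ⟨hy.1.le, hy.2.le⟩) (by norm_num) ?_ hz
  refine Summable.of_nonneg_of_le
      (fun k => mul_nonneg (hterm_nonneg _ hc k) (by positivity)) (fun k => ?_)
      (hterm_summable_half hc)
  exact mul_le_of_le_one_right (hterm_nonneg _ hc k) (pow_le_one₀ (by norm_num) (by norm_num))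

lemma zfun_mem {s r : ℝ} (hs : s ∈ Set.Ioo (0 : ℝ) 1) (hr : r ∈ Set.Ioo s 1) :
    s * (1 - r) / (r * (1 - s)) ∈ Set.Ioo (0 : ℝ) 1 := by
  obtain ⟨h0, h1⟩ := hs
  obtain ⟨h2, h3⟩ := hr
  have a1 : 0 < 1 - r := by linarith
  have a2 : 0 < 1 - s := by linarith
  have a3 : 0 < r := by linarith
  refine ⟨by positivity, ?_⟩
  rw [div_lt_one (by positivity)]
  nlinarith

lemma twoPt_eq {δ : ℝ} (hδ : 0 < δ) {s r : ℝ} (hs : s ∈ Set.Ioo (0 : ℝ) 1)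
    (hr : r ∈ Set.Ioo s 1) :
    twoPt δ s r = Kcoef δ * (√(s * (1 - s) * (r * (1 - r))) *
      Hf (δ / 2) (s * (1 - r) / (r * (1 - s)))) := by
  have hz := zfun_mem hs hr
  obtain ⟨h0, h1⟩ := hs
  obtain ⟨h2, h3⟩ := hr
  have a1 : 0 < 1 - r := by linarith
  have a2 : 0 < 1 - s := by linarith
  have a3 : 0 < r := by linarith
  have a4 : 0 < r - s := by linarith
  have hy : 0 < r * (1 - s) := by positivity
  rw [twoPt, if_pos h2, show (δ + 1) / 2 = δ / 2 + 1 / 2 by ring,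
    euler_transform (by positivity) hz.1.le hz.2, ← Hf]
  have e1 : 1 - s * (1 - r) / (r * (1 - s)) = (r - s) / (r * (1 - s)) := by
    field_simp; ring
  have e2 : √(s * (1 - s) * (r * (1 - r))) =
      (s * (1 - r)) ^ ((1 : ℝ) / 2) * (r * (1 - s)) ^ ((1 : ℝ) / 2) := by
    rw [← Real.mul_rpow (by positivity) hy.le, ← Real.sqrt_eq_rpow]; ring_nf
  have e3 : (r * (1 - s)) ^ (-(δ / 2 + 1 / 2)) * (r * (1 - s)) ^ (δ / 2 + 1) =
      (r * (1 - s)) ^ ((1 : ℝ) / 2) := by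
    rw [← Real.rpow_add hy]; ring_nf
  have e4 : ((r - s) / (r * (1 - s))) ^ (-(δ / 2 + 1)) =
      ((r - s) ^ (δ / 2 + 1))⁻¹ * (r * (1 - s)) ^ (δ / 2 + 1) := by
    rw [Real.rpow_neg (by positivity), Real.div_rpow a4.le hy.le, inv_div, div_eq_inv_mul]
  have e5 : (r - s) ^ (δ / 2 + 1) * ((r - s) ^ (δ / 2 + 1))⁻¹ = 1 :=
    mul_inv_cancel₀ (Real.rpow_pos_of_pos a4 _).ne'
  rw [e1, e4, e2, ← e3]
  generalize Hf _ _ = F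
  linear_combination (Kcoef δ * (s * (1 - r)) ^ ((1 : ℝ) / 2) *
    (r * (1 - s)) ^ (-(δ / 2 + 1 / 2)) * (r * (1 - s)) ^ (δ / 2 + 1) * F) * e5

lemma twoPt_deriv {δ : ℝ} (hδ : 0 < δ) {s r : ℝ} (hs : s ∈ Set.Ioo (0 : ℝ) 1)
    (hr : r ∈ Set.Ioo s 1) :
    deriv (fun r => twoPt δ s r) r = Kcoef δ *
      (s * (1 - s) * (1 - 2 * r) / (2 * √(s * (1 - s) * (r * (1 - r)))) *
        Hf (δ / 2) (s * (1 - r) / (r * (1 - s))) +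
       √(s * (1 - s) * (r * (1 - r))) *
        (Hd (δ / 2) (s * (1 - r) / (r * (1 - s))) * (-s / ((1 - s) * r ^ 2)))) := by
  have hz := zfun_mem hs hr
  have hev : (fun r => twoPt δ s r) =ᶠ[nhds r] fun r => Kcoef δ * (√(s * (1 - s) * (r * (1 - r))) *
      Hf (δ / 2) (s * (1 - r) / (r * (1 - s)))) := by
    filter_upwards [isOpen_Ioo.mem_nhds hr] with x hx
    exact twoPt_eq hδ hs hx
  rw [hev.deriv_eq]
  obtain ⟨h0, h1⟩ := hs
  obtain ⟨h2, h3⟩ := hr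
  have a1 : 0 < 1 - r := by linarith
  have a2 : 0 < 1 - s := by linarith
  have a3 : 0 < r := by linarith
  have d1 : HasDerivAt (fun r : ℝ => s * (1 - s) * (r * (1 - r))) (s * (1 - s) * (1 - 2 * r)) r := by
    have := (((hasDerivAt_id r).mul ((hasDerivAt_id r).const_sub 1)).const_mul (s * (1 - s)))
    refine this.congr_deriv ?_
    simp; ring_nf; simp
  have d2 := d1.sqrt (by positivity)
  have d3 : HasDerivAt (fun r : ℝ => s * (1 - r) / (r * (1 - s))) (-s / ((1 - s) * r ^ 2)) r := by
    have := (((hasDerivAt_id r).const_sub 1).const_mul s).div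
      ((hasDerivAt_id r).mul_const (1 - s)) (by simp; constructor <;> linarith)
    refine this.congr_deriv ?_
    simp only [id]
    field_simp
    ring
  have d4 := (Hf_hasDerivAt (show 0 < δ / 2 by positivity) hz).comp r d3
  exact ((d2.mul d4).const_mul (Kcoef δ)).deriv

theorem twoPt_deriv_right_limit (δ : ℝ) (hδ : 0 < δ) (s : ℝ) (hs : s ∈ Set.Ioo (0 : ℝ) 1) :
    Tendsto (fun r => deriv (fun r => twoPt δ s r) r)
      (nhdsWithin s (Set.Ioo s 1)) (nhds (-δ * s + (δ - 1) / 2)) := by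
  have hc : 0 < δ / 2 := by positivity
  have h0 := hs.1
  have a2 : 0 < 1 - s := by linarith [hs.2]
  have hzt : Tendsto (fun r : ℝ => s * (1 - r) / (r * (1 - s))) (nhdsWithin s (Set.Ioo s 1))
      (nhdsWithin 1 (Set.Icc 0 1)) := by
    refine tendsto_nhdsWithin_iff.2 ⟨?_, ?_⟩
    · have : ContinuousAt (fun r : ℝ => s * (1 - r) / (r * (1 - s))) s :=
        ContinuousAt.div (by fun_prop) (by fun_prop) (by positivity)
      have h := this.tendsto
      rw [div_self (by positivity)] at h
      exact h.mono_left nhdsWithin_le_nhds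
    · filter_upwards [self_mem_nhdsWithin] with r hr
      exact Set.Ioo_subset_Icc_self (zfun_mem hs hr)
  have l1 := ((Hf_continuousOn hc) 1 (by simp)).tendsto.comp hzt
  have l2 := ((Hd_continuousOn hc) 1 (by simp)).tendsto.comp hzt
  have hg : ContinuousAt (fun r : ℝ => √(s * (1 - s) * (r * (1 - r)))) s := by fun_prop
  have hgs : √(s * (1 - s) * (s * (1 - s))) = s * (1 - s) := Real.sqrt_mul_self (by positivity)
  have l3 : Tendsto (fun r : ℝ => √(s * (1 - s) * (r * (1 - r)))) (nhdsWithin s (Set.Ioo s 1))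
      (nhds (s * (1 - s))) := by
    have := hg.tendsto.mono_left (nhdsWithin_le_nhds (s := Set.Ioo s 1))
    rwa [hgs] at this
  have l4 : Tendsto (fun r : ℝ => s * (1 - s) * (1 - 2 * r)) (nhdsWithin s (Set.Ioo s 1))
      (nhds (s * (1 - s) * (1 - 2 * s))) :=
    (show ContinuousAt (fun r : ℝ => s * (1 - s) * (1 - 2 * r)) s by fun_prop).tendsto.mono_left
      nhdsWithin_le_nhds
  have l5 : Tendsto (fun r : ℝ => -s / ((1 - s) * r ^ 2)) (nhdsWithin s (Set.Ioo s 1))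
      (nhds (-s / ((1 - s) * s ^ 2))) :=
    (show ContinuousAt (fun r : ℝ => -s / ((1 - s) * r ^ 2)) s from
      ContinuousAt.div (by fun_prop) (by fun_prop) (by positivity)).tendsto.mono_left
      nhdsWithin_le_nhds
  have L := (((l4.div (l3.const_mul 2) (by positivity)).mul l1).add
    (l3.mul (l2.mul l5))).const_mul (Kcoef δ)
  have hK : Kcoef δ * Hf (δ / 2) 1 = δ := by
    rw [Hf_one hc, Kcoef, Real.Gamma_add_one hc.ne', show (δ + 1) / 2 = δ / 2 + 1 / 2 by ring]
    have g1 := (Real.Gamma_pos_of_pos hc).ne'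
    have g2 := (Real.Gamma_pos_of_pos (show 0 < δ / 2 + 1 / 2 by positivity)).ne'
    generalize Gamma (δ / 2 + 1 / 2) = A at *
    generalize Gamma (δ / 2) = B at *
    field_simp
  have hval : Kcoef δ * (s * (1 - s) * (1 - 2 * s) / (2 * (s * (1 - s))) * Hf (δ / 2) 1 +
      s * (1 - s) * (Hd (δ / 2) 1 * (-s / ((1 - s) * s ^ 2)))) = -δ * s + (δ - 1) / 2 := by
    rw [Hd_one hc]
    have e1 : s * (1 - s) * (1 - 2 * s) / (2 * (s * (1 - s))) = (1 - 2 * s) / 2 := by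
      field_simp
    have e2 : s * (1 - s) * (1 / (4 * (δ / 2)) * Hf (δ / 2) 1 * (-s / ((1 - s) * s ^ 2))) =
        -(1 / (2 * δ)) * Hf (δ / 2) 1 := by
      field_simp
      norm_num
    rw [e1, e2]
    have e3 : 1 / (2 * δ) * δ = 1 / 2 := by field_simp
    linear_combination ((1 - 2 * s) / 2 - 1 / (2 * δ)) * hK - e3
  rw [hval] at L
  refine L.congr' ?_
  filter_upwards [self_mem_nhdsWithin] with r hr
  rw [twoPt_deriv hδ hs hr]
  rfl
end

section
/- Let δ>0 and r ∈ (0,1). Then the double integral of the absolute value of b^{δ−1} times the third b-derivative of Σ^δ_{r,s}(b) is finite: ∫₀¹ ∫₀^∞ b^{δ−1} |(d³/db³)Σ^δ_{r,s}(b)| db ds < ∞. -/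
open MeasureTheory Real Filter

noncomputable def Pz (u : ℕ → ℝ) (z : ℝ) : ℝ :=
  Real.exp (-z) * ∑' k : ℕ, u k * (z ^ k / (Nat.factorial k : ℝ))

lemma Pz_summable (u : ℕ → ℝ) (M : ℝ) (hu : ∀ k, |u k| ≤ M * 2 ^ k) (z : ℝ) :
    Summable (fun k : ℕ => u k * (z ^ k / (Nat.factorial k : ℝ))) := by
  have h := (Real.summable_pow_div_factorial (2 * |z|)).mul_left M
  refine Summable.of_norm_bounded h (fun k => ?_)
  rw [Real.norm_eq_abs, abs_mul, abs_div, abs_pow, Nat.abs_cast, mul_pow]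
  calc |u k| * (|z| ^ k / (k.factorial : ℝ))
      ≤ (M * 2 ^ k) * (|z| ^ k / (k.factorial : ℝ)) := by
        gcongr; exact hu k
    _ = _ := by ring

lemma Pz_series_deriv (u : ℕ → ℝ) (M : ℝ) (hu : ∀ k, |u k| ≤ M * 2 ^ k) (z : ℝ) :
    HasDerivAt (fun z : ℝ => ∑' k : ℕ, u k * (z ^ k / (Nat.factorial k : ℝ)))
      (∑' k : ℕ, u (k + 1) * (z ^ k / (Nat.factorial k : ℝ))) z := by
  set R : ℝ := |z| + 1 with hR
  have hR0 : 0 ≤ R := by positivity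
  have hM : 0 ≤ M := by
    have := hu 0
    have h2 := abs_nonneg (u 0)
    simp at this; linarith
  set B : ℕ → ℝ := fun k => M * 2 ^ k * (k * R ^ (k - 1) / (Nat.factorial k : ℝ)) with hB
  have hBs : Summable B := by
    rw [← summable_nat_add_iff 1]
    have h := (Real.summable_pow_div_factorial (2 * R)).mul_left (2 * M)
    refine h.congr (fun k => ?_)
    simp only [hB, Nat.add_sub_cancel, Nat.factorial_succ]
    push_cast
    have : (k.factorial : ℝ) ≠ 0 := by positivity
    have : (k + 1 : ℝ) ≠ 0 := by positivity
    field_simp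
    ring
  have key := hasDerivAt_tsum_of_isPreconnected (u := B) (𝕜 := ℝ) (F := ℝ)
    (g := fun k z => u k * (z ^ k / (Nat.factorial k : ℝ)))
    (g' := fun k z => u k * ((k * z ^ (k - 1)) / (Nat.factorial k : ℝ)))
    (t := Metric.ball (0:ℝ) R) (y₀ := 0) (y := z) hBs Metric.isOpen_ball
    (convex_ball (0:ℝ) R).isPreconnected
    (fun k y hy => ((hasDerivAt_pow k y).div_const _).const_mul _)
    (fun k y hy => by
      have hy' : |y| ≤ R := by
        have := mem_ball_zero_iff.1 hy
        rw [Real.norm_eq_abs] at this; exact this.le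
      rw [Real.norm_eq_abs, abs_mul, abs_div, abs_mul, abs_pow, Nat.abs_cast, Nat.abs_cast]
      simp only [hB]
      gcongr
      exact hu k)
    (by simp [hR]; positivity)
    (Pz_summable u M hu 0)
    (by simp [hR])
  have hs : Summable (fun k : ℕ => u k * ((k * z ^ (k - 1)) / (Nat.factorial k : ℝ))) := by
    refine Summable.of_norm_bounded hBs (fun k => ?_)
    have hy' : |z| ≤ R := by simp [hR]
    rw [Real.norm_eq_abs, abs_mul, abs_div, abs_mul, abs_pow, Nat.abs_cast, Nat.abs_cast]
    simp only [hB]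
    gcongr
    exact hu k
  suffices heq : ∑' k : ℕ, u (k + 1) * (z ^ k / (Nat.factorial k : ℝ)) =
      ∑' k : ℕ, u k * ((k * z ^ (k - 1)) / (Nat.factorial k : ℝ)) by
    rw [heq]; exact key
  rw [hs.tsum_eq_zero_add]
  simp only [Nat.cast_zero, zero_mul, zero_div, mul_zero, zero_add]
  refine tsum_congr (fun k => ?_)
  simp only [Nat.add_sub_cancel, Nat.factorial_succ]
  push_cast
  have : (k.factorial : ℝ) ≠ 0 := by positivity
  have : (k + 1 : ℝ) ≠ 0 := by positivity
  field_simp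

lemma Pz_deriv (u v : ℕ → ℝ) (M : ℝ) (hu : ∀ k, |u k| ≤ M * 2 ^ k)
    (hv : ∀ k, v k = u (k + 1) - u k) (z : ℝ) :
    HasDerivAt (Pz u) (Pz v z) z := by
  have h1 := Pz_series_deriv u M hu z
  have h2 : HasDerivAt (fun z : ℝ => Real.exp (-z)) (-Real.exp (-z)) z := by
    simpa using (hasDerivAt_neg z).exp
  have h3 := h2.mul h1
  have hs1 := Pz_summable u M hu z
  have hs2 := Pz_summable (fun k => u (k + 1)) (2 * M)
    (fun k => (hu (k + 1)).trans (by rw [pow_succ]; linarith)) z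
  have : ∑' k : ℕ, v k * (z ^ k / (Nat.factorial k : ℝ))
      = ∑' k : ℕ, u (k + 1) * (z ^ k / (Nat.factorial k : ℝ))
        - ∑' k : ℕ, u k * (z ^ k / (Nat.factorial k : ℝ)) := by
    rw [← hs2.tsum_sub hs1]
    refine tsum_congr (fun k => ?_)
    rw [hv]; ring
  have heq : Pz v z = -Real.exp (-z) * (∑' k : ℕ, u k * (z ^ k / (Nat.factorial k : ℝ)))
      + Real.exp (-z) * ∑' k : ℕ, u (k + 1) * (z ^ k / (Nat.factorial k : ℝ)) := by
    unfold Pz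
    rw [this]; ring
  rw [heq]; exact h3

/-- Bound with falling weights. -/
lemma Pz_bound (u : ℕ → ℝ) (M : ℝ) (j : ℕ) 
    (hu : ∀ k, |u k| * (Nat.factorial (k + j) : ℝ) ≤ M * (Nat.factorial k : ℝ)) 
    (z : ℝ) (hz : 0 ≤ z) :
    z ^ j * |Pz u z| ≤ M := by
  have hM : 0 ≤ M := by
    have := hu 0
    have h2 : 0 ≤ |u 0| * (Nat.factorial (0 + j) : ℝ) := by positivity
    simp only [Nat.factorial_zero, Nat.cast_one, mul_one] at this; linarith
  have hE := Real.summable_pow_div_factorial z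
  have hEj : Summable (fun k : ℕ => z ^ (k + j) / (Nat.factorial (k + j) : ℝ)) :=
    (summable_nat_add_iff j).2 hE
  have hle : ∑' k : ℕ, z ^ (k + j) / (Nat.factorial (k + j) : ℝ) ≤ Real.exp z := by
    have h1 := hE.sum_add_tsum_nat_add j
    have h2 : Real.exp z = ∑' k : ℕ, z ^ k / (Nat.factorial k : ℝ) := by
      rw [Real.exp_eq_exp_ℝ, NormedSpace.exp_eq_tsum_div]
    rw [h2, ← h1]
    have : 0 ≤ ∑ i ∈ Finset.range j, z ^ i / (Nat.factorial i : ℝ) :=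
      Finset.sum_nonneg (fun i _ => by positivity)
    linarith
  have hb : ∀ k : ℕ, ‖z ^ j * (u k * (z ^ k / (Nat.factorial k : ℝ)))‖
      ≤ M * (z ^ (k + j) / (Nat.factorial (k + j) : ℝ)) := by
    intro k
    rw [Real.norm_eq_abs, abs_mul, abs_mul, abs_div, abs_pow, abs_pow, Nat.abs_cast,
      abs_of_nonneg hz]
    have h1 : (0:ℝ) < (k.factorial : ℝ) := by positivity
    have h2 : (0:ℝ) < ((k + j).factorial : ℝ) := by positivity
    have h3 : |u k| / (k.factorial : ℝ) ≤ M / ((k + j).factorial : ℝ) := by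
      rw [div_le_div_iff₀ h1 h2]; exact hu k
    calc z ^ j * (|u k| * (z ^ k / (k.factorial : ℝ)))
        = z ^ (k + j) * (|u k| / (k.factorial : ℝ)) := by rw [pow_add]; ring
      _ ≤ z ^ (k + j) * (M / ((k + j).factorial : ℝ)) := by gcongr
      _ = _ := by ring
  have h := tsum_of_norm_bounded (hEj.mul_left M).hasSum hb
  rw [tsum_mul_left, tsum_mul_left, Real.norm_eq_abs, abs_mul, abs_of_nonneg (pow_nonneg hz j)] at h
  unfold Pz
  rw [abs_mul, abs_of_pos (Real.exp_pos _)]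
  calc z ^ j * (Real.exp (-z) * |∑' k : ℕ, u k * (z ^ k / (k.factorial : ℝ))|)
      = Real.exp (-z) * (z ^ j * |∑' k : ℕ, u k * (z ^ k / (k.factorial : ℝ))|) := by ring
    _ ≤ Real.exp (-z) * (M * Real.exp z) := by
        refine mul_le_mul_of_nonneg_left ?_ (Real.exp_pos _).le
        exact h.trans (mul_le_mul_of_nonneg_left hle hM)
    _ = M := by
        rw [mul_left_comm, ← Real.exp_add]; simp

noncomputable def W (a : ℝ) (j : ℕ) (k : ℕ) : ℝ :=
  Real.Gamma (k + a + 1 / 2) / Real.Gamma (k + a + j)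

lemma W_pos (a : ℝ) (ha : 0 < a) (j k : ℕ) : 0 < W a j k := by
  unfold W
  have h1 := Real.Gamma_pos_of_pos (s := k + a + 1 / 2) (by positivity)
  have h2 := Real.Gamma_pos_of_pos (s := k + a + j) (by positivity)
  positivity

lemma W_succ (a : ℝ) (ha : 0 < a) (j k : ℕ) : W a j k = (k + a + j) * W a (j + 1) k := by
  unfold W
  have h2 := Real.Gamma_pos_of_pos (s := k + a + j) (by positivity)
  have : (k + a + ((j + 1 : ℕ) : ℝ)) = (k + a + j) + 1 := by push_cast; ring
  have h3 : (k + a + j : ℝ) ≠ 0 := by positivity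
  rw [this, Real.Gamma_add_one h3]
  field_simp

lemma W_diff (a : ℝ) (ha : 0 < a) (j k : ℕ) :
    W a j (k + 1) - W a j k = (1 / 2 - j) * W a (j + 1) k := by
  rw [W_succ a ha j k]
  have : W a j (k + 1) = (k + a + 1 / 2) * W a (j + 1) k := by
    unfold W
    have e1 : (((k + 1 : ℕ) : ℝ) + a + 1 / 2) = (k + a + 1 / 2) + 1 := by push_cast; ring
    have e2 : (((k + 1 : ℕ) : ℝ) + a + j) = k + a + ((j + 1 : ℕ) : ℝ) := by push_cast; ring
    have h3 : (k + a + 1 / 2 : ℝ) ≠ 0 := by positivity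
    rw [e1, e2, Real.Gamma_add_one h3]
    ring
  rw [this]; ring

lemma W1_le (a : ℝ) (ha : 0 < a) (k : ℕ) : W a 1 k ≤ W a 1 0 := by
  induction k with
  | zero => exact le_rfl
  | succ k ih =>
    have h := W_diff a ha 1 k
    have := W_pos a ha 2 k
    norm_num at h
    linarith

lemma W2_le (a : ℝ) (ha : 0 < a) (k : ℕ) : W a 2 k * (k + 1) ≤ W a 1 0 := by
  have h := W_succ a ha 1 k
  have h1 := W1_le a ha k
  have := W_pos a ha 2 k
  norm_num at h
  nlinarith

lemma W3_le (a : ℝ) (ha : 0 < a) (k : ℕ) : W a 3 k * ((k + 1) * (k + 2)) ≤ W a 1 0 := by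
  have h := W_succ a ha 2 k
  have h1 := W2_le a ha k
  have := W_pos a ha 3 k
  norm_num at h
  have h2 : W a 3 k * (k + 2) ≤ W a 2 k := by rw [h]; nlinarith
  have h3 : W a 3 k * (k + 2) * (k + 1) ≤ W a 2 k * (k + 1) := by gcongr
  linarith

/-- The function Ψ and its first three derivatives, with the bounds that are needed. -/
lemma Psi_exists (a : ℝ) (ha : 0 < a) : ∃ (P1 P2 P3 : ℝ → ℝ) (M : ℝ), 0 < M ∧
    (∀ z, HasDerivAt (Pz (W a 0)) (P1 z) z) ∧ (∀ z, HasDerivAt P1 (P2 z) z) ∧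
    (∀ z, HasDerivAt P2 (P3 z) z) ∧
    (∀ z, 0 ≤ z → |Pz (W a 0) z| ≤ M * (1 + z)) ∧ (∀ z, 0 ≤ z → |P1 z| ≤ M) ∧
    (∀ z, 0 ≤ z → (1 + z) * |P2 z| ≤ M) ∧ (∀ z, 0 ≤ z → (1 + z ^ 2) * |P3 z| ≤ M) := by
  set w := W a 1 0 with hw
  have hw0 : 0 < w := W_pos a ha 1 0
  set u1 : ℕ → ℝ := fun k => 1 / 2 * W a 1 k with hu1
  set u2 : ℕ → ℝ := fun k => -(1 / 4) * W a 2 k with hu2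
  set u3 : ℕ → ℝ := fun k => 3 / 8 * W a 3 k with hu3
  have p1 := fun k => W_pos a ha 1 k
  have p2 := fun k => W_pos a ha 2 k
  have p3 := fun k => W_pos a ha 3 k
  have b1 : ∀ k, |u1 k| ≤ w := fun k => by
    have := W1_le a ha k
    have := p1 k
    simp only [hu1]; rw [abs_of_pos (by positivity)]; linarith
  have b2 : ∀ k, |u2 k| * (k + 1) ≤ w := fun k => by
    have := W2_le a ha k
    have := p2 k
    have : 0 < W a 2 k * (k + 1) := by positivity
    simp only [hu2]; rw [abs_mul, abs_of_pos (p2 k), abs_neg, abs_of_pos (by norm_num)]; linarith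
  have b3 : ∀ k, |u3 k| * ((k + 1) * (k + 2)) ≤ w := fun k => by
    have := W3_le a ha k
    have := p3 k
    have : 0 < W a 3 k * ((k + 1) * (k + 2)) := by positivity
    simp only [hu3]; rw [abs_of_pos (by positivity)]; linarith
  have b2' : ∀ k, |u2 k| ≤ w := fun k => by
    have := b2 k
    have h : 0 ≤ |u2 k| * k := by positivity
    linarith
  have b3' : ∀ k, |u3 k| ≤ w := fun k => by
    have := b3 k
    have h : 0 ≤ |u3 k| * (k ^ 2 + 3 * k + 1) := by positivity
    linarith
  have one_le : ∀ k : ℕ, (1:ℝ) ≤ 2 ^ k := fun k => one_le_pow₀ (by norm_num)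
  have k_le : ∀ k : ℕ, (k:ℝ) ≤ 2 ^ k := fun k => by exact_mod_cast k.lt_two_pow_self.le
  have d0 : ∀ z, HasDerivAt (Pz (W a 0)) (Pz u1 z) z := by
    refine Pz_deriv _ _ ((1 + a) * w) (fun k => ?_) (fun k => ?_)
    · rw [abs_of_pos (W_pos a ha 0 k), W_succ a ha 0 k]
      have h1 : ((k:ℝ) + a + (0:ℕ)) ≤ (1 + a) * 2 ^ k := by
        have := one_le k
        have := k_le k
        push_cast
        nlinarith
      calc _ ≤ ((1 + a) * 2 ^ k) * w := by
            gcongr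
            · exact (p1 k).le
            · exact W1_le a ha k
        _ = _ := by ring
    · rw [W_diff a ha]; simp [hu1]
  have d1 : ∀ z, HasDerivAt (Pz u1) (Pz u2 z) z := by
    refine Pz_deriv _ _ w (fun k => (b1 k).trans ?_) (fun k => ?_)
    · nlinarith [one_le k]
    · have := W_diff a ha 1 k
      norm_num at this
      simp only [hu1, hu2]; linarith
  have d2 : ∀ z, HasDerivAt (Pz u2) (Pz u3 z) z := by
    refine Pz_deriv _ _ w (fun k => (b2' k).trans ?_) (fun k => ?_)
    · nlinarith [one_le k]
    · have := W_diff a ha 2 k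
      norm_num at this
      simp only [hu2, hu3]; linarith
  have c1 : ∀ z, 0 ≤ z → |Pz u1 z| ≤ w := fun z hz => by
    simpa using Pz_bound u1 w 0 (fun k => mul_le_mul_of_nonneg_right (b1 k) (Nat.cast_nonneg _)) z hz
  have c2 : ∀ z, 0 ≤ z → |Pz u2 z| ≤ w := fun z hz => by
    simpa using Pz_bound u2 w 0 (fun k => mul_le_mul_of_nonneg_right (b2' k) (Nat.cast_nonneg _)) z hz
  have c3 : ∀ z, 0 ≤ z → |Pz u3 z| ≤ w := fun z hz => by
    simpa using Pz_bound u3 w 0 (fun k => mul_le_mul_of_nonneg_right (b3' k) (Nat.cast_nonneg _)) z hz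
  have c2' : ∀ z, 0 ≤ z → z * |Pz u2 z| ≤ w := fun z hz => by
    have := Pz_bound u2 w 1 (fun k => by
      rw [Nat.factorial_succ]; push_cast
      have h : (0:ℝ) < k.factorial := by positivity
      nlinarith [b2 k]) z hz
    simpa using this
  have c3' : ∀ z, 0 ≤ z → z ^ 2 * |Pz u3 z| ≤ w := fun z hz => by
    refine Pz_bound u3 w 2 (fun k => ?_) z hz
    rw [Nat.factorial_succ, Nat.factorial_succ]; push_cast
    have h : (0:ℝ) < k.factorial := by positivity
    have := mul_le_mul_of_nonneg_right (b3 k) h.le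
    calc _ = |u3 k| * ((k + 1) * (k + 2)) * k.factorial := by ring
      _ ≤ _ := this
  have c0 : ∀ z, 0 ≤ z → |Pz (W a 0) z| ≤ |Pz (W a 0) 0| + w * z := fun z hz => by
    have h := (convex_Ici (0:ℝ)).norm_image_sub_le_of_norm_hasDerivWithin_le
      (f := Pz (W a 0)) (f' := Pz u1) (C := w) (x := 0) (y := z)
      (fun x _ => (d0 x).hasDerivWithinAt) (fun x hx => c1 x hx) (Set.self_mem_Ici) hz
    simp only [Real.norm_eq_abs, sub_zero, abs_of_nonneg hz] at h
    have := abs_sub_abs_le_abs_sub (Pz (W a 0) z) (Pz (W a 0) 0)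
    linarith
  refine ⟨Pz u1, Pz u2, Pz u3, 2 * w + |Pz (W a 0) 0|, by positivity, d0, d1, d2, ?_, ?_, ?_, ?_⟩
  · intro z hz
    have := c0 z hz
    have h1 : 0 ≤ |Pz (W a 0) 0| * z := by positivity
    have h2 : 0 ≤ w * z := by positivity
    nlinarith
  · intro z hz
    have := c1 z hz
    have := abs_nonneg (Pz (W a 0) 0)
    linarith
  · intro z hz
    have := c2 z hz
    have := c2' z hz
    have := abs_nonneg (Pz (W a 0) 0)
    linarith
  · intro z hz
    have := c3 z hz
    have := c3' z hz
    have := abs_nonneg (Pz (W a 0) 0)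
    linarith

lemma third_deriv (F F1 F2 F3 : ℝ → ℝ) (h0 : ∀ y, HasDerivAt F (F1 y) y)
    (h1 : ∀ y, HasDerivAt F1 (F2 y) y) (h2 : ∀ y, HasDerivAt F2 (F3 y) y) (b : ℝ) :
    deriv^[3] (fun b => F (b ^ 2)) b = 12 * b * F2 (b ^ 2) + 8 * b ^ 3 * F3 (b ^ 2) := by
  have hsq : ∀ x : ℝ, HasDerivAt (fun x : ℝ => x ^ 2) (2 * x) x := fun x => by
    simpa using hasDerivAt_pow 2 x
  have e1 : deriv (fun b => F (b ^ 2)) = fun b => 2 * b * F1 (b ^ 2) := by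
    funext x
    have h : HasDerivAt (fun b => F (b ^ 2)) (F1 (x ^ 2) * (2 * x)) x :=
      HasDerivAt.comp x (h0 (x ^ 2)) (hsq x)
    rw [h.deriv]; ring
  have hlin : ∀ x : ℝ, HasDerivAt (fun x : ℝ => 2 * x) 2 x := fun x => by
    simpa using (hasDerivAt_id x).const_mul 2
  have e2 : deriv (fun b => 2 * b * F1 (b ^ 2)) =
      fun b => 2 * F1 (b ^ 2) + 2 * b * (F2 (b ^ 2) * (2 * b)) := by
    funext x
    exact ((hlin x).mul ((h1 (x ^ 2)).comp x (hsq x))).deriv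
  have e3 : deriv (fun b => 2 * F1 (b ^ 2) + 2 * b * (F2 (b ^ 2) * (2 * b))) b =
      2 * (F2 (b ^ 2) * (2 * b)) + (2 * (F2 (b ^ 2) * (2 * b)) +
        2 * b * ((F3 (b ^ 2) * (2 * b)) * (2 * b) + F2 (b ^ 2) * 2)) := by
    exact ((((h1 (b ^ 2)).comp b (hsq b)).const_mul 2).add ((hlin b).mul
      (((h2 (b ^ 2)).comp b (hsq b)).mul (hlin b)))).deriv
  simp only [Function.iterate_succ, Function.iterate_zero, Function.comp, id]
  rw [e1, e2, e3]; ring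

/-- Third derivative of `L e^{-c b²} Ψ(κ b²)`. -/
lemma third_deriv_form (P0 P1 P2 P3 : ℝ → ℝ) (h0 : ∀ y, HasDerivAt P0 (P1 y) y)
    (h1 : ∀ y, HasDerivAt P1 (P2 y) y) (h2 : ∀ y, HasDerivAt P2 (P3 y) y) (L c κ b : ℝ) :
    deriv^[3] (fun b => L * (Real.exp (-c * b ^ 2) * P0 (κ * b ^ 2))) b =
      12 * b * (L * (Real.exp (-c * b ^ 2) * (κ ^ 2 * P2 (κ * b ^ 2) - 2 * c * κ * P1 (κ * b ^ 2)
        + c ^ 2 * P0 (κ * b ^ 2)))) +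
      8 * b ^ 3 * (L * (Real.exp (-c * b ^ 2) * (κ ^ 3 * P3 (κ * b ^ 2)
        - 3 * c * κ ^ 2 * P2 (κ * b ^ 2) + 3 * c ^ 2 * κ * P1 (κ * b ^ 2)
        - c ^ 3 * P0 (κ * b ^ 2)))) := by
  have he : ∀ y : ℝ, HasDerivAt (fun y : ℝ => Real.exp (-c * y)) (-c * Real.exp (-c * y)) y := by
    intro y
    have := ((hasDerivAt_id y).const_mul (-c)).exp
    simp only [id, mul_one] at this
    rw [mul_comm]; exact this
  have hk : ∀ y : ℝ, HasDerivAt (fun y : ℝ => κ * y) κ y := fun y => by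
    simpa using (hasDerivAt_id y).const_mul κ
  have hh : ∀ (G G' : ℝ → ℝ), (∀ y, HasDerivAt G (G' y) y) → ∀ y,
      HasDerivAt (fun y => G (κ * y)) (G' (κ * y) * κ) y := fun G G' h y =>
    HasDerivAt.comp y (h (κ * y)) (hk y)
  have k0 := hh P0 P1 h0
  have k1 := hh P1 P2 h1
  have k2 := hh P2 P3 h2
  refine third_deriv (fun y => L * (Real.exp (-c * y) * P0 (κ * y)))
    (fun y => L * (Real.exp (-c * y) * (κ * P1 (κ * y) - c * P0 (κ * y))))
    (fun y => L * (Real.exp (-c * y) * (κ ^ 2 * P2 (κ * y) - 2 * c * κ * P1 (κ * y)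
        + c ^ 2 * P0 (κ * y))))
    (fun y => L * (Real.exp (-c * y) * (κ ^ 3 * P3 (κ * y)
        - 3 * c * κ ^ 2 * P2 (κ * y) + 3 * c ^ 2 * κ * P1 (κ * y)
        - c ^ 3 * P0 (κ * y)))) ?_ ?_ ?_ b
  · intro y
    refine (((he y).mul (k0 y)).const_mul L).congr_deriv ?_
    ring
  · intro y
    refine (((he y).mul (((k1 y).const_mul κ).sub ((k0 y).const_mul c))).const_mul L).congr_deriv ?_
    simp only [Pi.sub_apply]
    ring
  · intro y
    refine (((he y).mul ((((k2 y).const_mul (κ ^ 2)).sub ((k1 y).const_mul (2 * c * κ))).add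
      ((k0 y).const_mul (c ^ 2)))).const_mul L).congr_deriv ?_
    simp only [Pi.sub_apply, Pi.add_apply]
    ring

lemma Sigma_form (δ : ℝ) (r s : ℝ) (hr : r ∈ Set.Ioo (0:ℝ) 1)
    (hs : s ∈ Set.Ioo (0:ℝ) 1) (hne : s ≠ r) :
    ∃ lam : ℝ, 0 < lam ∧ lam ≤ 1 ∧ SigmaRS δ r s = fun b =>
      (((2 : ℝ) ^ (δ / 2 - 1) * (r * (1 - r)) ^ (δ / 2))⁻¹ / Real.Gamma (δ / 2) *
        ((2 * |r - s|) ^ (1 / 2 : ℝ) * lam ^ (1 / 2 : ℝ))) *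
      (Real.exp (-(1 / (2 * (r * (1 - r)))) * b ^ 2) *
        Pz (W (δ / 2) 0) (lam / (2 * |r - s|) * b ^ 2)) := by
  obtain ⟨hr0, hr1⟩ := hr
  obtain ⟨hs0, hs1⟩ := hs
  have hr1' : 0 < 1 - r := by linarith
  have hd : 0 < |r - s| := abs_pos.2 (sub_ne_zero.2 hne.symm)
  have main : ∀ lam : ℝ, 0 < lam →
      Dcoef s r / 2 = 1 / (2 * (r * (1 - r))) + lam / (2 * |r - s|) →
      (∀ k, fcoef s r k = (2 * |r - s|) ^ ((1 : ℝ) / 2 - (k : ℝ)) * lam ^ ((k : ℝ) + 1 / 2)) →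
      SigmaRS δ r s = fun b =>
      (((2 : ℝ) ^ (δ / 2 - 1) * (r * (1 - r)) ^ (δ / 2))⁻¹ / Real.Gamma (δ / 2) *
        ((2 * |r - s|) ^ (1 / 2 : ℝ) * lam ^ (1 / 2 : ℝ))) *
      (Real.exp (-(1 / (2 * (r * (1 - r)))) * b ^ 2) *
        Pz (W (δ / 2) 0) (lam / (2 * |r - s|) * b ^ 2)) := by
    intro lam hlam hD hf
    funext b
    unfold SigmaRS Pz
    have e1 : ∀ k : ℕ, Ccoef δ k * fcoef s r k * b ^ (2 * k) =
        ((Real.Gamma (δ / 2))⁻¹ * ((2 * |r - s|) ^ (1 / 2 : ℝ) * lam ^ (1 / 2 : ℝ))) *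
        (W (δ / 2) 0 k * ((lam / (2 * |r - s|) * b ^ 2) ^ k / (Nat.factorial k : ℝ))) := by
      intro k
      have h2d : 0 < 2 * |r - s| := by positivity
      rw [hf, Real.rpow_sub h2d, Real.rpow_add hlam, Real.rpow_natCast, Real.rpow_natCast]
      unfold Ccoef W
      have e : (k:ℝ) + (δ + 1) / 2 = k + δ / 2 + 1 / 2 := by ring
      rw [e, mul_pow (lam / (2 * |r - s|)), div_pow, ← pow_mul]
      simp only [Nat.cast_zero, add_zero, div_eq_mul_inv, mul_inv]
      ring
    rw [tsum_congr e1, tsum_mul_left]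
    have e2 : Real.exp (-(Dcoef s r) * b ^ 2 / 2) =
        Real.exp (-(1 / (2 * (r * (1 - r)))) * b ^ 2) *
          Real.exp (-(lam / (2 * |r - s|) * b ^ 2)) := by
      rw [← Real.exp_add]
      congr 1
      linear_combination (-b ^ 2) * hD
    rw [e2]
    ring
  rcases lt_or_gt_of_ne hne with h | h
  · have habs : |r - s| = r - s := abs_of_pos (by linarith)
    have h' : 0 < r - s := by linarith
    refine ⟨s / r, by positivity, by rw [div_le_one hr0]; exact h.le, main _ (by positivity) ?_ ?_⟩
    · unfold Dcoef
      rw [if_pos h, habs]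
      field_simp
      ring
    · intro k
      unfold fcoef
      rw [if_pos h, habs]
  · have habs : |r - s| = s - r := by rw [abs_sub_comm]; exact abs_of_pos (by linarith)
    have h' : 0 < s - r := by linarith
    have h1s : 0 < 1 - s := by linarith
    refine ⟨(1 - s) / (1 - r), by positivity, by rw [div_le_one hr1']; linarith,
      main _ (by positivity) ?_ ?_⟩
    · unfold Dcoef
      rw [if_neg (not_lt.2 h.le), habs]
      field_simp
      ring
    · intro k
      unfold fcoef
      rw [if_neg (not_lt.2 h.le), habs]

lemma rpow_le_sum (q t b : ℝ) (hb : 0 < b) (ht : -q ≤ t) (ht5 : t ≤ 5) :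
    b ^ t ≤ b ^ (-q) + b ^ (5:ℝ) := by
  have h1 : 0 ≤ b ^ (-q) := by positivity
  have h2 : 0 ≤ b ^ (5:ℝ) := by positivity
  rcases le_total b 1 with h | h
  · have := Real.rpow_le_rpow_of_exponent_ge hb h ht
    linarith
  · have := Real.rpow_le_rpow_of_exponent_le h ht5
    linarith

lemma rpow_le_one_add (p z : ℝ) (n : ℕ) (hz : 0 ≤ z) (hp : 0 ≤ p) (hpn : p ≤ n) :
    z ^ p ≤ 1 + z ^ n := by
  rcases le_total z 1 with h | h
  · have := Real.rpow_le_one hz h hp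
    have : 0 ≤ z ^ n := by positivity
    linarith
  · have := Real.rpow_le_rpow_of_exponent_le h hpn
    rw [Real.rpow_natCast] at this
    linarith

lemma point_bound (P0 P1 P2 P3 : ℝ → ℝ) (M : ℝ) (hM : 0 < M)
    (h0 : ∀ z, 0 ≤ z → |P0 z| ≤ M * (1 + z)) (h1 : ∀ z, 0 ≤ z → |P1 z| ≤ M)
    (h2 : ∀ z, 0 ≤ z → (1 + z) * |P2 z| ≤ M) (h3 : ∀ z, 0 ≤ z → (1 + z ^ 2) * |P3 z| ≤ M)
    (q : ℝ) (hq : 0 < q) (hq1 : q < 1) (A κ d c b : ℝ) (hA : 0 ≤ A) (hκ : 0 < κ) (hd : 0 < d)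
    (hd1 : d ≤ 1) (hAd : A ≤ 2 * d ^ (1 / 2 : ℝ)) (hκd : κ ≤ d⁻¹) (hc : 0 < c) (hb : 0 < b) :
    |12 * b * (A * (Real.exp (-c * b ^ 2) * (κ ^ 2 * P2 (κ * b ^ 2) - 2 * c * κ * P1 (κ * b ^ 2)
        + c ^ 2 * P0 (κ * b ^ 2)))) +
      8 * b ^ 3 * (A * (Real.exp (-c * b ^ 2) * (κ ^ 3 * P3 (κ * b ^ 2)
        - 3 * c * κ ^ 2 * P2 (κ * b ^ 2) + 3 * c ^ 2 * κ * P1 (κ * b ^ 2)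
        - c ^ 3 * P0 (κ * b ^ 2))))| ≤
    d ^ (-(1 - q / 2)) * ((2 * M * (20 + 48 * c + 48 * c ^ 2 + 16 * c ^ 3)) *
      (Real.exp (-c * b ^ 2) * (b ^ (-q) + b ^ (5:ℝ)))) := by
  set E := d ^ (-(1 - q / 2)) with hE
  set S := b ^ (-q) + b ^ (5:ℝ) with hS
  set z := κ * b ^ 2 with hz
  set e := Real.exp (-c * b ^ 2) with he
  have he0 : 0 < e := Real.exp_pos _
  have hE0 : 0 < E := by positivity
  have hS0 : 0 < S := by positivity
  have hz0 : 0 < z := by positivity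
  have powd : ∀ t : ℝ, 0 ≤ t → t ≤ 3 / 2 - q / 2 → A * κ ^ t ≤ 2 * E := by
    intro t ht ht2
    have k1 : κ ^ t ≤ d ^ (-t) := by
      rw [Real.rpow_neg hd.le, ← Real.inv_rpow hd.le]
      exact Real.rpow_le_rpow hκ.le hκd ht
    calc A * κ ^ t ≤ (2 * d ^ (1 / 2 : ℝ)) * d ^ (-t) := by gcongr
      _ = 2 * d ^ (1 / 2 - t) := by rw [mul_assoc, ← Real.rpow_add hd]; ring_nf
      _ ≤ 2 * E := by
        gcongr 2 * ?_
        exact Real.rpow_le_rpow_of_exponent_ge hd hd1 (by linarith)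
  have a0 : A ≤ 2 * E := by simpa using powd 0 le_rfl (by linarith)
  have a1 : A * κ ≤ 2 * E := by simpa using powd 1 (by norm_num) (by linarith)
  have a2 : A * κ ^ (3 / 2 - q / 2) ≤ 2 * E := powd _ (by linarith) le_rfl
  have zpow : ∀ p : ℝ, z ^ p = κ ^ p * b ^ (2 * p) := by
    intro p
    rw [hz, Real.mul_rpow hκ.le (by positivity), ← Real.rpow_natCast b 2, ← Real.rpow_mul hb.le]
    norm_num
  have T0 : A * |P0 z| ≤ 2 * E * M * (1 + b ^ 2) := by
    calc A * |P0 z| ≤ A * (M * (1 + z)) := by gcongr; exact h0 z hz0.le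
      _ = M * (A + (A * κ) * b ^ 2) := by rw [hz]; ring
      _ ≤ M * (2 * E + (2 * E) * b ^ 2) := by gcongr
      _ = _ := by ring
  have T1 : A * κ * |P1 z| ≤ 2 * E * M := by
    gcongr; exact h1 z hz0.le
  have T2 : A * κ ^ 2 * |P2 z| * b ≤ 2 * E * M * b ^ (-q) := by
    have k1 : z ^ ((1 + q) / 2) * |P2 z| ≤ M := by
      refine le_trans ?_ (h2 z hz0.le)
      gcongr
      simpa using rpow_le_one_add ((1 + q) / 2) z 1 hz0.le (by linarith) (by push_cast; linarith)
    have k2 : κ ^ 2 * b = κ ^ (3 / 2 - q / 2) * b ^ (-q) * z ^ ((1 + q) / 2) := by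
      rw [zpow]
      have : κ ^ 2 = κ ^ (3 / 2 - q / 2) * κ ^ ((1 + q) / 2) := by
        have e1 : (3 / 2 - q / 2) + (1 + q) / 2 = ((2 : ℕ) : ℝ) := by push_cast; ring
        rw [← Real.rpow_add hκ, e1, Real.rpow_natCast]
      rw [this]
      have : b = b ^ (-q) * b ^ (2 * ((1 + q) / 2)) := by
        rw [← Real.rpow_add hb]; ring_nf; simp
      nth_rewrite 1 [this]
      ring
    calc A * κ ^ 2 * |P2 z| * b = A * (κ ^ 2 * b) * |P2 z| := by ring
      _ = (A * κ ^ (3 / 2 - q / 2)) * (z ^ ((1 + q) / 2) * |P2 z|) * b ^ (-q) := by rw [k2]; ring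
      _ ≤ 2 * E * M * b ^ (-q) := by gcongr
  have T3 : A * κ ^ 3 * |P3 z| * b ^ 3 ≤ 2 * E * M * b ^ (-q) := by
    have k1 : z ^ ((3 + q) / 2) * |P3 z| ≤ M := by
      refine le_trans ?_ (h3 z hz0.le)
      gcongr
      exact rpow_le_one_add ((3 + q) / 2) z 2 hz0.le (by linarith) (by push_cast; linarith)
    have k2 : κ ^ 3 * b ^ 3 = κ ^ (3 / 2 - q / 2) * b ^ (-q) * z ^ ((3 + q) / 2) := by
      rw [zpow]
      have : κ ^ 3 = κ ^ (3 / 2 - q / 2) * κ ^ ((3 + q) / 2) := by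
        have e1 : (3 / 2 - q / 2) + (3 + q) / 2 = ((3 : ℕ) : ℝ) := by push_cast; ring
        rw [← Real.rpow_add hκ, e1, Real.rpow_natCast]
      rw [this]
      have : b ^ 3 = b ^ (-q) * b ^ (2 * ((3 + q) / 2)) := by
        have e1 : -q + 2 * ((3 + q) / 2) = ((3 : ℕ) : ℝ) := by push_cast; ring
        rw [← Real.rpow_add hb, e1, Real.rpow_natCast]
      rw [this]
      ring
    calc A * κ ^ 3 * |P3 z| * b ^ 3 = A * (κ ^ 3 * b ^ 3) * |P3 z| := by ring
      _ = (A * κ ^ (3 / 2 - q / 2)) * (z ^ ((3 + q) / 2) * |P3 z|) * b ^ (-q) := by rw [k2]; ring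
      _ ≤ 2 * E * M * b ^ (-q) := by gcongr
  have s0 : b ^ (-q) ≤ S := rpow_le_sum q (-q) b hb le_rfl (by linarith)
  have s1 : b ≤ S := by
    have := rpow_le_sum q 1 b hb (by linarith) (by norm_num)
    rwa [Real.rpow_one] at this
  have s3 : b ^ 3 ≤ S := by
    have := rpow_le_sum q (3:ℕ) b hb (by push_cast; linarith) (by norm_num)
    rwa [Real.rpow_natCast] at this
  have s5 : b ^ 5 ≤ S := by
    have := rpow_le_sum q (5:ℕ) b hb (by push_cast; linarith) (by norm_num)
    rwa [Real.rpow_natCast] at this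
  have s2 : b ^ 2 * b ^ (-q) ≤ S := by
    have := rpow_le_sum q ((2:ℕ) + -q) b hb (by push_cast; linarith) (by push_cast; linarith)
    rwa [Real.rpow_add hb, Real.rpow_natCast] at this
  set X := 2 * E * M with hX
  have hX0 : 0 < X := by positivity
  have U2 : A * κ ^ 2 * |P2 z| * b ≤ X * S := T2.trans (by gcongr)
  have U3 : A * κ ^ 3 * |P3 z| * b ^ 3 ≤ X * S := T3.trans (by gcongr)
  have U2' : A * κ ^ 2 * |P2 z| * b ^ 3 ≤ X * S := by
    calc _ = (A * κ ^ 2 * |P2 z| * b) * b ^ 2 := by ring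
      _ ≤ (X * b ^ (-q)) * b ^ 2 := by gcongr
      _ = X * (b ^ 2 * b ^ (-q)) := by ring
      _ ≤ _ := by gcongr
  have U1 : A * κ * |P1 z| * b ≤ X * S := by gcongr
  have U1' : A * κ * |P1 z| * b ^ 3 ≤ X * S := by gcongr
  have U0 : A * |P0 z| * b ≤ X * (2 * S) := by
    calc _ ≤ (X * (1 + b ^ 2)) * b := by gcongr
      _ = X * (b + b ^ 3) := by ring
      _ ≤ _ := by gcongr; linarith
  have U0' : A * |P0 z| * b ^ 3 ≤ X * (2 * S) := by
    calc _ ≤ (X * (1 + b ^ 2)) * b ^ 3 := by gcongr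
      _ = X * (b ^ 3 + b ^ 5) := by ring
      _ ≤ _ := by gcongr; linarith
  have tri1 : |κ ^ 2 * P2 z - 2 * c * κ * P1 z + c ^ 2 * P0 z| ≤
      κ ^ 2 * |P2 z| + 2 * c * κ * |P1 z| + c ^ 2 * |P0 z| := by
    have := abs_add_le (κ ^ 2 * P2 z - 2 * c * κ * P1 z) (c ^ 2 * P0 z)
    have := abs_sub (κ ^ 2 * P2 z) (2 * c * κ * P1 z)
    have e1 : |κ ^ 2 * P2 z| = κ ^ 2 * |P2 z| := by rw [abs_mul, abs_of_pos (by positivity)]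
    have e2 : |2 * c * κ * P1 z| = 2 * c * κ * |P1 z| := by
      rw [abs_mul, abs_of_pos (by positivity)]
    have e3 : |c ^ 2 * P0 z| = c ^ 2 * |P0 z| := by rw [abs_mul, abs_of_pos (by positivity)]
    linarith
  have tri2 : |κ ^ 3 * P3 z - 3 * c * κ ^ 2 * P2 z + 3 * c ^ 2 * κ * P1 z - c ^ 3 * P0 z| ≤
      κ ^ 3 * |P3 z| + 3 * c * κ ^ 2 * |P2 z| + 3 * c ^ 2 * κ * |P1 z| + c ^ 3 * |P0 z| := by
    have := abs_sub (κ ^ 3 * P3 z - 3 * c * κ ^ 2 * P2 z + 3 * c ^ 2 * κ * P1 z) (c ^ 3 * P0 z)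
    have := abs_add_le (κ ^ 3 * P3 z - 3 * c * κ ^ 2 * P2 z) (3 * c ^ 2 * κ * P1 z)
    have := abs_sub (κ ^ 3 * P3 z) (3 * c * κ ^ 2 * P2 z)
    have e0 : |κ ^ 3 * P3 z| = κ ^ 3 * |P3 z| := by rw [abs_mul, abs_of_pos (by positivity)]
    have e1 : |3 * c * κ ^ 2 * P2 z| = 3 * c * κ ^ 2 * |P2 z| := by
      rw [abs_mul, abs_of_pos (by positivity)]
    have e2 : |3 * c ^ 2 * κ * P1 z| = 3 * c ^ 2 * κ * |P1 z| := by
      rw [abs_mul, abs_of_pos (by positivity)]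
    have e3 : |c ^ 3 * P0 z| = c ^ 3 * |P0 z| := by rw [abs_mul, abs_of_pos (by positivity)]
    linarith
  refine (abs_add_le _ _).trans ?_
  rw [abs_mul (12 * b), abs_mul A, abs_mul e, abs_mul (8 * b ^ 3), abs_mul A, abs_mul e,
    abs_of_pos he0, abs_of_nonneg hA, abs_of_pos (show 0 < 12 * b by positivity),
    abs_of_pos (show 0 < 8 * b ^ 3 by positivity)]
  calc _ ≤ 12 * b * (A * (e * (κ ^ 2 * |P2 z| + 2 * c * κ * |P1 z| + c ^ 2 * |P0 z|))) +
        8 * b ^ 3 * (A * (e * (κ ^ 3 * |P3 z| + 3 * c * κ ^ 2 * |P2 z| + 3 * c ^ 2 * κ * |P1 z|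
          + c ^ 3 * |P0 z|))) := by gcongr
    _ = e * (12 * (A * κ ^ 2 * |P2 z| * b) + 24 * c * (A * κ * |P1 z| * b)
        + 12 * c ^ 2 * (A * |P0 z| * b) + 8 * (A * κ ^ 3 * |P3 z| * b ^ 3)
        + 24 * c * (A * κ ^ 2 * |P2 z| * b ^ 3) + 24 * c ^ 2 * (A * κ * |P1 z| * b ^ 3)
        + 8 * c ^ 3 * (A * |P0 z| * b ^ 3)) := by ring
    _ ≤ e * (12 * (X * S) + 24 * c * (X * S)
        + 12 * c ^ 2 * (X * (2 * S)) + 8 * (X * S)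
        + 24 * c * (X * S) + 24 * c ^ 2 * (X * S)
        + 8 * c ^ 3 * (X * (2 * S))) := by gcongr
    _ = _ := by rw [hX]; ring

theorem integrability_third_derivative_sigma (δ : ℝ) (hδ : 0 < δ)
    (r : ℝ) (hr : r ∈ Set.Ioo (0 : ℝ) 1) :
    (∫⁻ s in Set.Ioo (0:ℝ) 1, ∫⁻ b in Set.Ioi (0:ℝ),
        ENNReal.ofReal (b ^ (δ - 1) * |deriv^[3] (SigmaRS δ r s) b|)) < ⊤ := by
  obtain ⟨P1, P2, P3, M, hM, d0, d1, d2, b0, b1, b2, b3⟩ := Psi_exists (δ / 2) (by positivity)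
  have hr' := hr
  obtain ⟨hr0, hr1⟩ := hr'
  have hr1' : 0 < 1 - r := by linarith
  set q : ℝ := min (δ / 2) (1 / 2) with hqdef
  have hq : 0 < q := lt_min (by positivity) (by norm_num)
  have hq1 : q < 1 := (min_le_right _ _).trans_lt (by norm_num)
  have hqδ : q < δ := (min_le_left _ _).trans_lt (by linarith)
  set c : ℝ := 1 / (2 * (r * (1 - r))) with hc
  have hc0 : 0 < c := by positivity
  set K : ℝ := ((2 : ℝ) ^ (δ / 2 - 1) * (r * (1 - r)) ^ (δ / 2))⁻¹ / Real.Gamma (δ / 2) with hK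
  have hK0 : 0 < K := by
    have := Real.Gamma_pos_of_pos (s := δ / 2) (by positivity)
    positivity
  set N : ℝ := K * (2 * M * (20 + 48 * c + 48 * c ^ 2 + 16 * c ^ 3)) with hN
  have hN0 : 0 < N := by positivity
  set H : ℝ → ℝ := fun b => N * (b ^ (δ - 1 - q) * Real.exp (-c * b ^ 2)
    + b ^ (δ - 1 + 5) * Real.exp (-c * b ^ 2)) with hH
  have hHint : IntegrableOn H (Set.Ioi 0) :=
    ((integrableOn_rpow_mul_exp_neg_mul_sq hc0 (by linarith)).add
      (integrableOn_rpow_mul_exp_neg_mul_sq hc0 (by linarith))).const_mul N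
  have hbound : ∀ s ∈ Set.Ioo (0:ℝ) 1, s ≠ r → ∀ b ∈ Set.Ioi (0:ℝ),
      b ^ (δ - 1) * |deriv^[3] (SigmaRS δ r s) b| ≤ |r - s| ^ (-(1 - q / 2)) * H b := by
    intro s hs hne b hb
    have hb0 : 0 < b := hb
    obtain ⟨lam, hl0, hl1, hform⟩ := Sigma_form δ r s hr hs hne
    have hd : 0 < |r - s| := abs_pos.2 (sub_ne_zero.2 hne.symm)
    have hd1 : |r - s| ≤ 1 := by
      rw [abs_le]; constructor <;> linarith [hs.1, hs.2]
    set d := |r - s| with hddef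
    set A := (2 * d) ^ (1 / 2 : ℝ) * lam ^ (1 / 2 : ℝ) with hAdef
    have hA0 : 0 ≤ A := by positivity
    have hA : A ≤ 2 * d ^ (1 / 2 : ℝ) := by
      rw [hAdef, Real.mul_rpow (by norm_num) hd.le]
      have k1 : lam ^ (1 / 2 : ℝ) ≤ 1 := Real.rpow_le_one hl0.le hl1 (by norm_num)
      have k2 : (2:ℝ) ^ (1 / 2 : ℝ) ≤ 2 := by
        have := Real.rpow_le_rpow_of_exponent_le (show (1:ℝ) ≤ 2 by norm_num)
          (show (1 / 2 : ℝ) ≤ 1 by norm_num)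
        simpa using this
      calc _ ≤ (2 * d ^ (1 / 2 : ℝ)) * 1 := by gcongr
        _ = _ := by ring
    have hκ : lam / (2 * d) ≤ d⁻¹ := by
      rw [div_le_iff₀ (by positivity)]
      have : d⁻¹ * (2 * d) = 2 := by field_simp
      linarith
    have hpb := point_bound (Pz (W (δ / 2) 0)) P1 P2 P3 M hM b0 b1 b2 b3 q hq hq1 A (lam / (2 * d))
      d c b hA0 (by positivity) hd hd1 hA hκ hc0 hb0
    have h3 := third_deriv_form (Pz (W (δ / 2) 0)) P1 P2 P3 d0 d1 d2 (K * A) c (lam / (2 * d)) b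
    rw [hform]
    rw [h3]
    have hpw : b ^ (δ - 1 - q) = b ^ (δ - 1) * b ^ (-q) := by
      rw [← Real.rpow_add hb0]; rfl
    have hpw2 : b ^ (δ - 1 + 5) = b ^ (δ - 1) * b ^ (5:ℝ) := by
      rw [← Real.rpow_add hb0]
    have hb1 : 0 < b ^ (δ - 1) := by positivity
    have hmul := mul_le_mul_of_nonneg_left hpb (show 0 ≤ b ^ (δ - 1) * K by positivity)
    have hK' : ∀ x y : ℝ, y = K * x → b ^ (δ - 1) * |y| = b ^ (δ - 1) * K * |x| := by
      intro x y h
      rw [h, abs_mul, abs_of_pos hK0]; ring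
    refine (hK' _ _ ?_).trans_le (hmul.trans_eq ?_)
    · ring
    · simp only [hH, hN, hpw, hpw2]
      ring
  have hH0 : ∀ b ∈ Set.Ioi (0:ℝ), 0 ≤ H b := fun b hb => by
    have hb0 : 0 < b := hb
    simp only [hH]; positivity
  set I : ENNReal := ∫⁻ b in Set.Ioi (0:ℝ), ENNReal.ofReal (H b) with hI
  have hIfin : I < ⊤ := by
    have h := hHint.2
    refine lt_of_le_of_lt ?_ h.lt_top
    refine lintegral_mono (fun b => ?_)
    exact Real.ofReal_le_enorm (H b)
  have hinner : ∀ s ∈ Set.Ioo (0:ℝ) 1, s ≠ r →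
      ∫⁻ b in Set.Ioi (0:ℝ), ENNReal.ofReal (b ^ (δ - 1) * |deriv^[3] (SigmaRS δ r s) b|)
      ≤ ENNReal.ofReal (|r - s| ^ (-(1 - q / 2))) * I := by
    intro s hs hne
    rw [hI, ← lintegral_const_mul' _ _ ENNReal.ofReal_ne_top]
    refine setLIntegral_mono' measurableSet_Ioi (fun b hb => ?_)
    rw [← ENNReal.ofReal_mul (by positivity)]
    exact ENNReal.ofReal_le_ofReal (hbound s hs hne b hb)
  have houter : IntegrableOn (fun s : ℝ => |r - s| ^ (-(1 - q / 2))) (Set.Ioo 0 1) := by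
    have ht : -1 < -(1 - q / 2) := by linarith
    have hl : IntervalIntegrable (fun s : ℝ => (r - s) ^ (-(1 - q / 2))) volume 0 r := by
      have h := (intervalIntegral.intervalIntegrable_rpow' (a := r) (b := 0) ht).comp_sub_left r
      simpa using h
    have hg : IntervalIntegrable (fun s : ℝ => (s - r) ^ (-(1 - q / 2))) volume r 1 := by
      have h := (intervalIntegral.intervalIntegrable_rpow' (a := 0) (b := 1 - r) ht).comp_sub_right r
      simpa using h
    rw [intervalIntegrable_iff_integrableOn_Ioc_of_le hr0.le] at hl
    rw [intervalIntegrable_iff_integrableOn_Ioc_of_le hr1.le] at hg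
    have hl' : IntegrableOn (fun s : ℝ => |r - s| ^ (-(1 - q / 2))) (Set.Ioc 0 r) :=
      hl.congr_fun (fun s hs => by
        simp only [abs_of_nonneg (sub_nonneg.2 hs.2)]) measurableSet_Ioc
    have hg' : IntegrableOn (fun s : ℝ => |r - s| ^ (-(1 - q / 2))) (Set.Ioc r 1) :=
      hg.congr_fun (fun s hs => by
        simp only [abs_sub_comm r s, abs_of_pos (sub_pos.2 hs.1)]) measurableSet_Ioc
    refine (hl'.union hg').mono_set ?_
    rw [Set.Ioc_union_Ioc_eq_Ioc hr0.le hr1.le]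
    exact Set.Ioo_subset_Ioc_self
  calc _ ≤ ∫⁻ s in Set.Ioo (0:ℝ) 1, ENNReal.ofReal (|r - s| ^ (-(1 - q / 2))) * I := by
        refine lintegral_mono_ae ?_
        have hne : ∀ᵐ s ∂(volume.restrict (Set.Ioo (0:ℝ) 1)), s ≠ r :=
          ae_restrict_of_ae (Measure.ae_ne volume r)
        filter_upwards [hne, ae_restrict_mem measurableSet_Ioo] with s hs1 hs2
        exact hinner s hs2 hs1
    _ = (∫⁻ s in Set.Ioo (0:ℝ) 1, ENNReal.ofReal (|r - s| ^ (-(1 - q / 2)))) * I :=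
        lintegral_mul_const' _ _ hIfin.ne
    _ < ⊤ := by
        refine ENNReal.mul_lt_top ?_ hIfin
        refine lt_of_le_of_lt ?_ houter.2.lt_top
        exact lintegral_mono (fun s => Real.ofReal_le_enorm _)
end
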